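/- Set ε₀ = 2^{−2^{n−1}}. For every leader's decision x = (x₁, x₂) in the box [x̲₁, x̄₁] × [x̲₂, x̄₂] and every choice y_{n+1} ∈ [0, x₁], y_{n+2} ∈ [−x₂, x₂], the point ŷ ∈ ℝ^{n+2} with ŷ_i = 2^{−2^{i−1}} for i = 1, …, n−1 and ŷ_n = 0 satisfies: ŷ₁ + ŷ_n = 1/2; ŷ_i² = ŷ_{i+1} for i = 1, …, n−2; ŷ_i ≥ 0 for i = 1, …, n; and ŷ_{n−1}² − ŷ_n = ε₀, so the only violated constraint of Ω(x) is the quadratic constraint ŷ_{n−1}² ≤ ŷ_n, which is violated by exactly ε₀. Consequently, ŷ ∈ Ω_ε(x) for every ε ≥ ε₀, and f(x, ŷ) = 1/2. -/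

import Mathlib

/-!
Everything rests on the identity `(2^(-2^k))² = 2^(-2^(k+1))`. It makes the first `n - 2` quadratic
constraints tight at `ŷ`; in the last one the value `2^(-2^(n-1))` meets `ŷₙ = 0` instead, and
this is the whole violation. Since `ŷₙ = 0`, the bilinear term of the objective vanishes and only
`ŷ₁ = 2^(-2^0) = 1/2` is left. The lemmas `yhat_lt`, `yhat_pred`, `yhat_n`, `yhat_n_succ` evaluate
`ŷ` on each of the four branches of its definition.
-/

/-- The set `Ω_ε(x)` of ε-feasible points: all linear constraints of `Ω(x)`
hold exactly and each quadratic constraint may be violated by at most `ε`. -/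
def OmegaEps (n : ℕ) (x1 x2 ε : ℝ) : Set (Fin (n + 2) → ℝ) :=
  {y | y ⟨0, by omega⟩ + y ⟨n - 1, by omega⟩ = 1 / 2 ∧
    (∀ i : ℕ, ∀ _h1 : 1 ≤ i, ∀ _h2 : i ≤ n - 1,
      (y ⟨i - 1, by omega⟩) ^ 2 ≤ y ⟨i, by omega⟩ + ε) ∧
    (∀ i : ℕ, ∀ _h1 : 1 ≤ i, ∀ _h2 : i ≤ n, 0 ≤ y ⟨i - 1, by omega⟩) ∧
    0 ≤ y ⟨n, by omega⟩ ∧ y ⟨n, by omega⟩ ≤ x1 ∧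
    -x2 ≤ y ⟨n + 1, by omega⟩ ∧ y ⟨n + 1, by omega⟩ ≤ x2}

/-- The follower's objective `f(x, y) = y₁ − yₙ (x₁ + x₂ − y_{n+1} − y_{n+2})`. -/
noncomputable def follower (n : ℕ) (x1 x2 : ℝ) (y : Fin (n + 2) → ℝ) : ℝ :=
  y ⟨0, by omega⟩ -
    y ⟨n - 1, by omega⟩ * (x1 + x2 - y ⟨n, by omega⟩ - y ⟨n + 1, by omega⟩)

/-- The ε-feasible point `ŷ`: `ŷᵢ = 2^(−2^(i−1))` for `i = 1,…,n−1`,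
`ŷₙ = 0`, `ŷ_{n+1} = w1`, `ŷ_{n+2} = w2` (Lean index `j` is math index `j+1`). -/
noncomputable def yhat (n : ℕ) (w1 w2 : ℝ) : Fin (n + 2) → ℝ := fun j =>
  if (j : ℕ) + 1 ≤ n - 1 then 1 / 2 ^ 2 ^ (j : ℕ)
  else if (j : ℕ) + 1 = n then 0
  else if (j : ℕ) = n then w1
  else w2

theorem yhat_lt {n : ℕ} {w1 w2 : ℝ} {j : ℕ} (h : j + 1 ≤ n - 1) (hj : j < n + 2) :
    yhat n w1 w2 ⟨j, hj⟩ = 1 / 2 ^ 2 ^ j := by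
  simp [yhat, h]

theorem yhat_pred {n : ℕ} {w1 w2 : ℝ} {j : ℕ} (h : j + 1 = n) (hj : j < n + 2) :
    yhat n w1 w2 ⟨j, hj⟩ = 0 := by
  have h1 : ¬ j + 1 ≤ n - 1 := by omega
  simp only [yhat, if_neg h1, if_pos h]

theorem yhat_n {n : ℕ} {w1 w2 : ℝ} (hj : n < n + 2) : yhat n w1 w2 ⟨n, hj⟩ = w1 := by
  have h1 : ¬ n + 1 ≤ n - 1 := by omega
  have h2 : ¬ n + 1 = n := by omega
  simp only [yhat, if_neg h1, if_neg h2, if_true]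

theorem yhat_n_succ {n : ℕ} {w1 w2 : ℝ} (hj : n + 1 < n + 2) :
    yhat n w1 w2 ⟨n + 1, hj⟩ = w2 := by
  have h1 : ¬ n + 1 + 1 ≤ n - 1 := by omega
  have h2 : ¬ n + 1 + 1 = n := by omega
  have h3 : ¬ n + 1 = n := by omega
  simp only [yhat, if_neg h1, if_neg h2, if_neg h3]

theorem sq_one_div_two_pow_two_pow (k : ℕ) :
    ((1 : ℝ) / 2 ^ 2 ^ k) ^ 2 = 1 / 2 ^ 2 ^ (k + 1) := by
  rw [div_pow, one_pow, ← pow_mul, ← pow_succ]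

/-- Set `ε₀ = 2^(−2^(n−1))`. For every leader's decision `x` in the box and
every choice `y_{n+1} = w1 ∈ [0, x₁]`, `y_{n+2} = w2 ∈ [−x₂, x₂]`, the point
`ŷ` satisfies `ŷ₁ + ŷₙ = 1/2`, `ŷᵢ² = ŷᵢ₊₁` for `i = 1,…,n−2`, `ŷᵢ ≥ 0` for
`i = 1,…,n`, and `ŷ_{n−1}² − ŷₙ = ε₀`, so the only violated constraint of
`Ω(x)` is the quadratic constraint `ŷ_{n−1}² ≤ ŷₙ`, violated by exactly `ε₀`.
Consequently, `ŷ ∈ Ω_ε(x)` for every `ε ≥ ε₀`, and `f(x, ŷ) = 1/2`. -/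
theorem stmt8 (n : ℕ) (hn : 2 ≤ n)
    (xl1 xl2 xu1 xu2 : ℝ) (hl1 : 1 ≤ xl1) (hl2 : 1 ≤ xl2)
    (hu1 : xl1 < xu1) (hu2 : xl2 < xu2)
    (x1 x2 : ℝ) (hx1 : x1 ∈ Set.Icc xl1 xu1) (hx2 : x2 ∈ Set.Icc xl2 xu2)
    (w1 w2 : ℝ) (hw1 : w1 ∈ Set.Icc 0 x1) (hw2 : w2 ∈ Set.Icc (-x2) x2) :
    yhat n w1 w2 ⟨0, by omega⟩ + yhat n w1 w2 ⟨n - 1, by omega⟩ = 1 / 2 ∧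
    (∀ i : ℕ, ∀ _h1 : 1 ≤ i, ∀ _h2 : i ≤ n - 2,
      (yhat n w1 w2 ⟨i - 1, by omega⟩) ^ 2 = yhat n w1 w2 ⟨i, by omega⟩) ∧
    (∀ i : ℕ, ∀ _h1 : 1 ≤ i, ∀ _h2 : i ≤ n, 0 ≤ yhat n w1 w2 ⟨i - 1, by omega⟩) ∧
    (yhat n w1 w2 ⟨n - 2, by omega⟩) ^ 2 - yhat n w1 w2 ⟨n - 1, by omega⟩ =
      1 / 2 ^ 2 ^ (n - 1) ∧
    (∀ ε : ℝ, 1 / 2 ^ 2 ^ (n - 1) ≤ ε → yhat n w1 w2 ∈ OmegaEps n x1 x2 ε) ∧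
    follower n x1 x2 (yhat n w1 w2) = 1 / 2 := by
  have hfirst : yhat n w1 w2 ⟨0, by omega⟩ = 1 / 2 := by
    rw [yhat_lt (by omega)]; norm_num
  have hlast : yhat n w1 w2 ⟨n - 1, by omega⟩ = 0 := yhat_pred (by omega) _
  have hsum : yhat n w1 w2 ⟨0, by omega⟩ + yhat n w1 w2 ⟨n - 1, by omega⟩ = 1 / 2 := by
    rw [hfirst, hlast, add_zero]
  have htight : ∀ i : ℕ, ∀ _h1 : 1 ≤ i, ∀ _h2 : i ≤ n - 2,
      (yhat n w1 w2 ⟨i - 1, by omega⟩) ^ 2 = yhat n w1 w2 ⟨i, by omega⟩ := by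
    intro i h1 h2
    rw [yhat_lt (by omega), yhat_lt (by omega), sq_one_div_two_pow_two_pow,
      Nat.sub_add_cancel h1]
  have hnonneg : ∀ i : ℕ, ∀ _h1 : 1 ≤ i, ∀ _h2 : i ≤ n,
      0 ≤ yhat n w1 w2 ⟨i - 1, by omega⟩ := by
    intro i h1 h2
    rcases Nat.lt_or_ge i n with h | h
    · rw [yhat_lt (by omega)]; positivity
    · rw [yhat_pred (by omega)]
  have hviol : (yhat n w1 w2 ⟨n - 2, by omega⟩) ^ 2 - yhat n w1 w2 ⟨n - 1, by omega⟩ =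
      1 / 2 ^ 2 ^ (n - 1) := by
    rw [hlast, yhat_lt (by omega), sq_one_div_two_pow_two_pow, sub_zero,
      show n - 2 + 1 = n - 1 by omega]
  refine ⟨hsum, htight, hnonneg, hviol, fun ε hε => ⟨hsum, fun i h1 h2 => ?_, hnonneg, ?_⟩, ?_⟩
  · have hpos : (0 : ℝ) < 1 / 2 ^ 2 ^ (n - 1) := by positivity
    rcases Nat.lt_or_ge i (n - 1) with h | h
    · rw [htight i h1 (by omega)]; linarith
    · obtain rfl : i = n - 1 := by omega
      have hidx : (⟨n - 1 - 1, by omega⟩ : Fin (n + 2)) = ⟨n - 2, by omega⟩ :=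
        Fin.ext (by simp only; omega)
      rw [hidx]; linarith
  · rw [yhat_n, yhat_n_succ]
    exact ⟨hw1.1, hw1.2, hw2.1, hw2.2⟩
  · rw [follower, hfirst, hlast, zero_mul, sub_zero]
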